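/- Let Ω be an infinite set and s,t injective functions Ω → Ω with |Ω \ s(Ω)| = |Ω \ t(Ω)| = 0, i.e., s,t ∈ S(Ω). Then s ∼_s t in the monoid J(Ω) of injective self-maps; more specifically, every permutation of an infinite set Ω is a commutator in S(Ω), hence s ∼_s^1 t. -/

import Mathlib

/-- `s ∼ₛ¹ t` in the monoid `J(Ω)` of injective self-maps of `Ω`: `s = p₁⋯pₙ` and
`t = p_{f(1)}⋯p_{f(n)}` for injective `p_i` and a permutation `f` (as a list permutation). -/
def JSimS1 {Ω : Type*} (s t : Function.End Ω) : Prop :=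
  ∃ l l' : List (Function.End Ω), (∀ p ∈ l, Function.Injective p) ∧ l.Perm l' ∧
    s = l.prod ∧ t = l'.prod

open Classical in
/-- An injection between finite parts of `E` extends to a permutation preserving `E`. -/
theorem exists_perm_extending {Ω : Type*} (S E : Finset Ω) (f : Ω → Ω) (hSE : S ⊆ E)
    (hf : ∀ x ∈ S, f x ∈ E) (hinj : Set.InjOn f S) :
    ∃ p : Equiv.Perm Ω, (∀ x ∈ S, p x = f x) ∧ ∀ x ∈ E, p x ∈ E := by
  obtain ⟨g, hg⟩ := Finset.exists_equiv_extend_of_card_eq (α := E) (β := Ω) (t := E)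
    (by simp) (s := S.subtype (· ∈ E)) (f := fun x => f x)
    (by
      intro y hy
      simp only [Finset.mem_image, Finset.mem_subtype] at hy
      obtain ⟨x, hx, rfl⟩ := hy
      exact hf _ hx)
    (by
      intro x hx y hy hxy
      exact Subtype.ext (hinj (by simpa using hx) (by simpa using hy) hxy))
  refine ⟨Equiv.Perm.ofSubtype (p := (· ∈ E)) g, fun x hx => ?_, fun x hx => ?_⟩
  · rw [Equiv.Perm.ofSubtype_apply_of_mem (p := (· ∈ E)) g (hSE hx)]
    exact hg ⟨x, hSE hx⟩ (by simpa using hx)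
  · rw [Equiv.Perm.ofSubtype_apply_of_mem (p := (· ∈ E)) g hx]
    exact (g ⟨x, hx⟩).2

/-- On the finite set `D`, which `a` preserves, `b` intertwines `a` with `r * a`. -/
def IntertwinesOn {Ω : Type*} (r : Equiv.Perm Ω) (D : Finset Ω) (a b : Equiv.Perm Ω) : Prop :=
  (∀ x ∈ D, a x ∈ D) ∧ ∀ x ∈ D, b (a x) = r (a (b x))

open Classical in
theorem IntertwinesOn.exists_extension {Ω : Type*} [Infinite Ω] [Countable Ω]
    {r : Equiv.Perm Ω} {D : Finset Ω} {a b : Equiv.Perm Ω} (h : IntertwinesOn r D a b) (x₀ : Ω) :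
    ∃ (D' : Finset Ω) (a' b' : Equiv.Perm Ω), IntertwinesOn r D' a' b' ∧ D ⊆ D' ∧
      (∀ x ∈ D, a' x = a x) ∧ (∀ x ∈ D, a' (b x) = a (b x)) ∧ (∀ x ∈ D, b' x = b x) ∧
      x₀ ∈ D' := by
  set R := D.image b with hR
  set E := insert x₀ (D ∪ R ∪ R.image a) with hE
  have hDE : D ⊆ E := by grind
  have hbE : ∀ x ∈ D, b x ∈ E := by grind
  obtain ⟨p, hpa, hpE⟩ := exists_perm_extending (D ∪ R) E a (by grind)
    (by
      intro x hx
      rcases Finset.mem_union.1 hx with hx | hx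
      · exact hDE (h.1 x hx)
      · grind) a.injective.injOn
  have hpD : ∀ x ∈ D, p x = a x := fun x hx => hpa x (by grind)
  have hpR : ∀ x ∈ D, p (b x) = a (b x) := fun x hx => hpa _ (by grind)
  have hpDD : ∀ x, p x ∈ D → x ∈ D := by
    have hs : D.image p = D := Finset.eq_of_subset_of_card_le
      (by
        intro y hy
        obtain ⟨x, hx, rfl⟩ := Finset.mem_image.1 hy
        rw [hpD x hx]; exact h.1 x hx)
      (by rw [Finset.card_image_of_injective _ p.injective])
    intro x hx
    rw [← hs] at hx
    obtain ⟨y, hy, hxy⟩ := Finset.mem_image.1 hx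
    exact p.injective hxy ▸ hy
  obtain ⟨g, hg, hgE⟩ : ∃ g : Ω → Ω, Function.Injective g ∧ ∀ x, g x ∉ E ∪ E.image r := by
    have : Infinite (↑((E ∪ E.image r : Finset Ω) : Set Ω)ᶜ : Set Ω) :=
      (Finset.finite_toSet _).infinite_compl.to_subtype
    obtain ⟨u, hu⟩ := exists_injective_nat Ω
    let v := Infinite.natEmbedding (↑((E ∪ E.image r : Finset Ω) : Set Ω)ᶜ : Set Ω)
    exact ⟨fun x => v (u x), fun x y hxy => hu (v.injective (Subtype.ext hxy)),
      fun x => (v (u x)).2⟩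
  obtain ⟨b', hb', -⟩ := exists_perm_extending E (E ∪ E.image (fun x => if x ∈ D then b x else g x))
    (fun x => if x ∈ D then b x else g x) (by grind) (by grind)
    (by
      intro x hx y hy hxy
      have := hg.eq_iff (a := x) (b := y)
      have := b.injective.eq_iff (a := x) (b := y)
      grind)
  have hb'D : ∀ x ∈ D, b' x = b x := fun x hx => by rw [hb' x (hDE hx), if_pos hx]
  have hb'E : ∀ x ∈ E, x ∉ D → b' x ∉ E ∧ b' x ∉ E.image r := fun x hx hxD => by
    rw [hb' x hx, if_neg hxD]; have := hgE x; grind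
  let f : Ω → Ω := fun y => if y ∈ E then p y else r⁻¹ (b' (p (b'⁻¹ y)))
  have hfE : ∀ y ∈ E, f y = p y := fun y hy => if_pos hy
  have hfb : ∀ x ∈ E, x ∉ D → f (b' x) = r⁻¹ (b' (p x)) := fun x hx hxD => by
    simp [f, (hb'E x hx hxD).1]
  have hsplit : ∀ y ∈ E ∪ E.image b', y ∈ E ∨ ∃ x ∈ E, x ∉ D ∧ y = b' x := by
    intro y hy
    rcases Finset.mem_union.1 hy with hy | hy
    · exact Or.inl hy
    · obtain ⟨x, hx, rfl⟩ := Finset.mem_image.1 hy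
      by_cases hxD : x ∈ D
      · exact Or.inl (hb'D x hxD ▸ hbE x hxD)
      · exact Or.inr ⟨x, hx, hxD, rfl⟩
  have hne : ∀ y ∈ E, ∀ x ∈ E, x ∉ D → f y ≠ f (b' x) := by
    intro y hy x hx hxD he
    rw [hfE y hy, hfb x hx hxD] at he
    refine (hb'E (p x) (hpE x hx) (fun hp => hxD (hpDD x hp))).2 ?_
    exact Finset.mem_image.2 ⟨p y, hpE y hy, by rw [he]; simp⟩
  obtain ⟨a', ha', -⟩ := exists_perm_extending (E ∪ E.image b')
    ((E ∪ E.image b') ∪ (E ∪ E.image b').image f) f Finset.subset_union_left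
    (fun x hx => Finset.mem_union_right _ (Finset.mem_image_of_mem f hx))
    (by
      intro y hy z hz hyz
      rcases hsplit y hy with hy | ⟨x, hx, hxD, rfl⟩ <;>
        rcases hsplit z hz with hz | ⟨w, hw, hwD, rfl⟩
      · rw [hfE y hy, hfE z hz] at hyz
        exact p.injective hyz
      · exact (hne y hy w hw hwD hyz).elim
      · exact (hne z hz x hx hxD hyz.symm).elim
      · rw [hfb x hx hxD, hfb w hw hwD] at hyz
        rw [p.injective (b'.injective (r⁻¹.injective hyz))])
  have ha'E : ∀ y ∈ E, a' y = p y := fun y hy => by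
    rw [ha' y (Finset.mem_union_left _ hy), hfE y hy]
  refine ⟨E, a', b', ⟨fun x hx => ha'E x hx ▸ hpE x hx, fun x hx => ?_⟩, hDE,
    fun x hx => by rw [ha'E x (hDE hx), hpD x hx],
    fun x hx => by rw [ha'E _ (hbE x hx), hpR x hx], hb'D, Finset.mem_insert_self _ _⟩
  by_cases hxD : x ∈ D
  · rw [ha'E x hx, hpD x hxD, hb'D x hxD, hb'D _ (h.1 x hxD), ha'E _ (hbE x hxD), hpR x hxD,
      h.2 x hxD]
  · rw [ha'E x hx, ha' (b' x) (Finset.mem_union_right _ (Finset.mem_image_of_mem _ hx)),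
      hfb x hx hxD]
    simp

open Classical in
theorem IntertwinesOn.symm {Ω : Type*} {r : Equiv.Perm Ω} {D : Finset Ω} {a b : Equiv.Perm Ω}
    (h : IntertwinesOn r D a b) : IntertwinesOn r⁻¹ (D.image b) (r * a) b⁻¹ := by
  constructor
  · intro y hy
    obtain ⟨x, hx, rfl⟩ := Finset.mem_image.1 hy
    rw [Equiv.Perm.mul_apply, ← h.2 x hx]
    exact Finset.mem_image_of_mem _ (h.1 x hx)
  · intro y hy
    obtain ⟨x, hx, rfl⟩ := Finset.mem_image.1 hy
    rw [Equiv.Perm.mul_apply, ← h.2 x hx]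
    simp

open Classical in
theorem IntertwinesOn.exists_extension_range {Ω : Type*} [Infinite Ω] [Countable Ω]
    {r : Equiv.Perm Ω} {D : Finset Ω} {a b : Equiv.Perm Ω} (h : IntertwinesOn r D a b) (y₀ : Ω) :
    ∃ (D' : Finset Ω) (a' b' : Equiv.Perm Ω), IntertwinesOn r D' a' b' ∧ D ⊆ D' ∧
      (∀ x ∈ D, a' x = a x) ∧ (∀ x ∈ D, a' (b x) = a (b x)) ∧ (∀ x ∈ D, b' x = b x) ∧
      y₀ ∈ D'.image b' := by
  obtain ⟨D', a', b', h', hD, h1, h2, h3, hy⟩ := h.symm.exists_extension y₀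
  simp only [Finset.forall_mem_image] at h1 h2 h3
  have hb : ∀ x ∈ D, b' (b x) = x := fun x hx => by simpa using h3 hx
  refine ⟨D'.image b', r⁻¹ * a', b'⁻¹, by simpa using h'.symm, fun x hx => ?_, fun x hx => ?_,
    fun x hx => ?_, fun x hx => ?_, ?_⟩
  · exact Finset.mem_image.2 ⟨b x, hD (Finset.mem_image_of_mem _ hx), hb x hx⟩
  · have := h2 hx
    simp at this
    simp [this]
  · simp [h1 hx]
  · rw [Equiv.Perm.inv_eq_iff_eq, hb x hx]
  · simp only [Finset.mem_image]
    exact ⟨b' y₀, ⟨y₀, hy, rfl⟩, by simp⟩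

open Classical in
theorem exists_intertwining_perm {Ω : Type*} [Infinite Ω] [Countable Ω] (r : Equiv.Perm Ω) :
    ∃ a b : Equiv.Perm Ω, b * a = r * a * b := by
  let T := {s : Finset Ω × Equiv.Perm Ω × Equiv.Perm Ω // IntertwinesOn r s.1 s.2.1 s.2.2}
  let le : T → T → Prop := fun s t => s.1.1 ⊆ t.1.1 ∧ (∀ x ∈ s.1.1, t.1.2.1 x = s.1.2.1 x) ∧
    (∀ x ∈ s.1.1, t.1.2.1 (s.1.2.2 x) = s.1.2.1 (s.1.2.2 x)) ∧
    (∀ x ∈ s.1.1, t.1.2.2 x = s.1.2.2 x)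
  have le_rfl' : ∀ s, le s s := fun s => by simp [le]
  have le_trans' : ∀ s t u, le s t → le t u → le s u := by
    rintro s t u ⟨h1, h2, h3, h4⟩ ⟨k1, k2, k3, k4⟩
    refine ⟨h1.trans k1, fun x hx => ?_, fun x hx => ?_, fun x hx => ?_⟩
    · rw [k2 x (h1 hx), h2 x hx]
    · rw [← h3 x hx, ← h4 x hx, k3 x (h1 hx)]
    · rw [k4 x (h1 hx), h4 x hx]
  have step : ∀ (s : T) (x : Ω), ∃ t : T, le s t ∧ x ∈ t.1.1 ∧ x ∈ t.1.1.image t.1.2.2 := by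
    intro s x
    obtain ⟨D, a, b, h, h1, h2, h3, h4, hx⟩ := s.2.exists_extension x
    obtain ⟨D', a', b', h', h1', h2', h3', h4', hx'⟩ := h.exists_extension_range x
    exact ⟨⟨(D', a', b'), h'⟩, le_trans' s ⟨(D, a, b), h⟩ _ ⟨h1, h2, h3, h4⟩
      ⟨h1', h2', h3', h4'⟩, h1' hx, hx'⟩
  choose next hnext using step
  obtain ⟨e, he⟩ := exists_surjective_nat Ω
  let S : ℕ → T := fun n => Nat.rec ⟨(∅, 1, 1), by simp [IntertwinesOn]⟩ (fun n s => next s (e n)) n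
  have hS : ∀ m n, m ≤ n → le (S m) (S n) := by
    intro m n hmn
    induction n, hmn using Nat.le_induction with
    | base => exact le_rfl' _
    | succ n _ ih => exact le_trans' _ _ _ ih (hnext (S n) (e n)).1
  have hdom : ∀ x, ∃ n, x ∈ (S n).1.1 := fun x => by
    obtain ⟨n, rfl⟩ := he x
    exact ⟨n + 1, (hnext (S n) (e n)).2.1⟩
  have hran : ∀ y, ∃ n, ∃ x ∈ (S n).1.1, (S n).1.2.2 x = y := fun x => by
    obtain ⟨n, rfl⟩ := he x
    exact ⟨n + 1, Finset.mem_image.1 (hnext (S n) (e n)).2.2⟩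
  choose N hN using hdom
  let α : Ω → Ω := fun x => (S (N x)).1.2.1 x
  let β : Ω → Ω := fun x => (S (N x)).1.2.2 x
  have hmono : ∀ {m n x}, m ≤ n → x ∈ (S m).1.1 → x ∈ (S n).1.1 :=
    fun h hx => (hS _ _ h).1 hx
  have hα : ∀ n, ∀ x ∈ (S n).1.1, α x = (S n).1.2.1 x := fun n x hx => by
    rw [← (hS n _ (le_max_left n (N x))).2.1 x hx,
      (hS (N x) _ (le_max_right n (N x))).2.1 x (hN x)]
  have hβ : ∀ n, ∀ x ∈ (S n).1.1, β x = (S n).1.2.2 x := fun n x hx => by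
    rw [← (hS n _ (le_max_left n (N x))).2.2.2 x hx,
      (hS (N x) _ (le_max_right n (N x))).2.2.2 x (hN x)]
  have hαβ : ∀ n, ∀ x ∈ (S n).1.1, α (β x) = (S n).1.2.1 ((S n).1.2.2 x) := fun n x hx => by
    rw [hβ n x hx]
    set y := (S n).1.2.2 x
    rw [← (hS n _ (le_max_left n (N y))).2.2.1 x hx,
      (hS (N y) _ (le_max_right n (N y))).2.1 y (hN y)]
  have hαinj : Function.Injective α := fun x y hxy => by
    rw [hα _ x (hmono (le_max_left (N x) (N y)) (hN x)),
      hα _ y (hmono (le_max_right (N x) (N y)) (hN y))] at hxy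
    exact Equiv.injective _ hxy
  have hβinj : Function.Injective β := fun x y hxy => by
    rw [hβ _ x (hmono (le_max_left (N x) (N y)) (hN x)),
      hβ _ y (hmono (le_max_right (N x) (N y)) (hN y))] at hxy
    exact Equiv.injective _ hxy
  have hαsurj : Function.Surjective α := fun y => by
    obtain ⟨x, hx, hxy⟩ := Finset.surj_on_of_inj_on_of_card_le (s := (S (N y)).1.1)
      (t := (S (N y)).1.1) (fun x _ => (S (N y)).1.2.1 x) (S (N y)).2.1
      (fun x z _ _ h => Equiv.injective _ h) le_rfl y (hN y)
    exact ⟨x, (hα _ x hx).trans hxy.symm⟩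
  have hβsurj : Function.Surjective β := fun y => by
    obtain ⟨n, x, hx, hxy⟩ := hran y
    exact ⟨x, by rw [hβ n x hx, hxy]⟩
  refine ⟨Equiv.ofBijective α ⟨hαinj, hαsurj⟩, Equiv.ofBijective β ⟨hβinj, hβsurj⟩,
    Equiv.ext fun x => ?_⟩
  change β (α x) = r (α (β x))
  rw [hα _ x (hN x), hαβ _ x (hN x), hβ (N x) _ ((S (N x)).2.1 x (hN x)), (S (N x)).2.2 x (hN x)]

theorem exists_eq_commutator_of_countable {Ω : Type*} [Infinite Ω] [Countable Ω]
    (q : Equiv.Perm Ω) : ∃ a b : Equiv.Perm Ω, q = a * b * a⁻¹ * b⁻¹ := by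
  obtain ⟨a, b, h⟩ := exists_intertwining_perm q⁻¹
  refine ⟨a, b, ?_⟩
  have h' : q * (b * a) = a * b := by rw [h]; group
  rw [← h']
  group

universe u in
/-- A permutation of an uncountable set preserves the fibres of some map with countably infinite
fibres. -/
theorem exists_invariant_map_countable_fibers {Ω : Type u} [Uncountable Ω] (q : Equiv.Perm Ω) :
    ∃ (I : Type u) (π : Ω → I), (∀ x, π (q x) = π x) ∧
      ∀ i, Infinite {x // π x = i} ∧ Countable {x // π x = i} := by
  let O := Quotient (Equiv.Perm.SameCycle.setoid q)
  let c : Ω → O := Quotient.mk _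
  have hc : ∀ o, Set.Countable {x | c x = o} := by
    intro o
    obtain ⟨x, rfl⟩ := Quotient.exists_rep o
    refine (Set.countable_range (fun n : ℤ => (q ^ n) x)).mono fun y hy => ?_
    exact (Quotient.exact hy : q.SameCycle y x).symm
  have hO : Infinite O := by
    by_contra hfin
    rw [not_infinite_iff_finite] at hfin
    have : (Set.univ : Set Ω).Countable :=
      (Set.countable_iUnion hc).mono fun x _ => Set.mem_iUnion.2 ⟨c x, rfl⟩
    exact Set.not_countable_univ this
  obtain ⟨φ⟩ : Nonempty (O ≃ O × ℕ) := by
    rw [← Cardinal.lift_mk_eq']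
    simp
  refine ⟨O, fun x => (φ (c x)).1, fun x => ?_, fun i => ⟨?_, ?_⟩⟩
  · change (φ (c (q x))).1 = (φ (c x)).1
    have : c (q x) = c x := Quotient.sound (Equiv.Perm.sameCycle_apply_left.2 (.refl q x))
    rw [this]
  · choose y hy using fun n : ℕ => Quotient.exists_rep (φ.symm (i, n))
    have hy' : ∀ n, φ (c (y n)) = (i, n) := fun n => by simp only [c, hy, Equiv.apply_symm_apply]
    refine Infinite.of_injective (fun n => (⟨y n, by rw [hy']⟩ : {x // (φ (c x)).1 = i})) ?_
    intro m n hmn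
    have h1 : y m = y n := congrArg Subtype.val hmn
    have h2 := hy' m
    rw [h1, hy' n] at h2
    exact (congrArg Prod.snd h2).symm
  · refine Set.Countable.to_subtype (s := {x | (φ (c x)).1 = i}) ?_
    refine (Set.countable_iUnion fun n : ℕ => hc (φ.symm (i, n))).mono fun x hx => ?_
    refine Set.mem_iUnion.2 ⟨(φ (c x)).2, ?_⟩
    change c x = _
    rw [Equiv.eq_symm_apply]
    exact Prod.ext hx rfl

/-- Ore's theorem: every permutation of an infinite set is a commutator. -/
theorem exists_eq_commutator {Ω : Type*} [Infinite Ω] (q : Equiv.Perm Ω) :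
    ∃ a b : Equiv.Perm Ω, q = a * b * a⁻¹ * b⁻¹ := by
  rcases (em (Countable Ω)).imp_right not_countable_iff.1 with _ | _
  · exact exists_eq_commutator_of_countable q
  obtain ⟨I, π, hπ, hfib⟩ := exists_invariant_map_countable_fibers q
  have key : ∀ i, ∃ a b : Equiv.Perm {x // π x = i},
      q.subtypePerm (p := fun x => π x = i) (fun x => by rw [hπ]) = a * b * a⁻¹ * b⁻¹ := by
    intro i
    have := (hfib i).1
    have := (hfib i).2
    exact exists_eq_commutator_of_countable _
  choose a b hab using key
  let Φ : (∀ i, Equiv.Perm {x // π x = i}) →* Equiv.Perm Ω :=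
    ((Equiv.sigmaFiberEquiv π).permCongrHom.toMonoidHom).comp
      (Equiv.Perm.sigmaCongrRightHom _)
  refine ⟨Φ a, Φ b, ?_⟩
  rw [← map_inv, ← map_inv, ← map_mul, ← map_mul, ← map_mul]
  have hq : a * b * a⁻¹ * b⁻¹ =
      fun i => q.subtypePerm (p := fun x => π x = i) (fun x => by rw [hπ]) :=
    funext fun i => (hab i).symm
  rw [hq]
  rfl

/-- For infinite `Ω`, every permutation of `Ω` is a commutator in `S(Ω)`; consequently any
two bijective self-maps `s, t` satisfy `s ∼ₛ¹ t` in `J(Ω)`. -/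
theorem bijections_simS1 {Ω : Type*} [Infinite Ω] (s t : Function.End Ω)
    (hs : Function.Bijective s) (ht : Function.Bijective t) :
    (∀ q : Equiv.Perm Ω, ∃ a b : Equiv.Perm Ω, q = a * b * a⁻¹ * b⁻¹) ∧ JSimS1 s t := by
  refine ⟨exists_eq_commutator, ?_⟩
  obtain ⟨a, b, hab⟩ :=
    exists_eq_commutator (Equiv.ofBijective s hs * (Equiv.ofBijective t ht)⁻¹)
  rw [mul_inv_eq_iff_eq_mul] at hab
  refine ⟨[⇑a, ⇑b, ⇑a⁻¹, ⇑b⁻¹, t], [⇑b, ⇑a, ⇑a⁻¹, ⇑b⁻¹, t], ?_, List.Perm.swap _ _ _, ?_, ?_⟩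
  · refine List.forall_mem_cons.2 ⟨a.injective, List.forall_mem_cons.2 ⟨b.injective,
      List.forall_mem_cons.2 ⟨a⁻¹.injective, List.forall_mem_cons.2 ⟨b⁻¹.injective,
      List.forall_mem_singleton.2 ht.1⟩⟩⟩⟩
  · funext x
    exact DFunLike.congr_fun hab x
  · funext x
    have h : b * a * a⁻¹ * b⁻¹ = 1 := by group
    exact (DFunLike.congr_fun h (t x)).symm
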